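/- Every solvable subgroup of GL(n,ℤ) is polycyclic. -/

import Mathlib

theorem MonoidHom.group_fg_of_ker_of_range {G Q : Type*} [Group G] [Group Q] (f : G →* Q)
    (hk : Group.FG f.ker) (hr : Group.FG f.range) : Group.FG G := by
  classical
  rw [Group.fg_iff_subgroup_fg] at hk hr
  obtain ⟨T, hT⟩ := hr
  have hsub : (T : Set Q) ⊆ f '' Set.univ := by
    rw [Set.image_univ, ← MonoidHom.coe_range, ← hT]
    exact Subgroup.subset_closure
  obtain ⟨T', -, rfl⟩ := Finset.subset_set_image_iff.1 hsub
  have hmap : (Subgroup.closure (T' : Set G)).map f = f.range := by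
    rw [MonoidHom.map_closure, ← hT, Finset.coe_image]
  rw [Group.fg_def, ← codisjoint_iff.1 (Subgroup.map_eq_range_iff.1 hmap)]
  exact Subgroup.FG.sup ⟨T', rfl⟩ hk

theorem Subgroup.group_fg_of_commGroup {A : Type*} [CommGroup A] [Group.FG A] (H : Subgroup A) :
    Group.FG H := by
  rw [Group.fg_iff_subgroup_fg, Subgroup.fg_iff_add_fg]
  have : Module.Finite ℤ (Additive A) := inferInstance
  have h : (AddSubgroup.toIntSubmodule (Subgroup.toAddSubgroup H)).FG := IsNoetherian.noetherian _
  rwa [Submodule.fg_iff_addSubgroup_fg] at h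

theorem MonoidHom.group_fg_of_injective {G A : Type*} [Group G] [CommGroup A] [Group.FG A]
    (f : G →* A) (hf : Function.Injective f) : Group.FG G :=
  f.group_fg_of_ker_of_range
    ((Group.fg_iff_subgroup_fg _).2 ((f.ker_eq_bot_iff.2 hf) ▸ Subgroup.FG.bot))
    (Subgroup.group_fg_of_commGroup _)

/-- One step of a subnormal series with cyclic factors. -/
def CyclicStep {G : Type*} [Group G] (H K : Subgroup G) : Prop :=
  H ≤ K ∧ (∀ g ∈ K, ∀ x ∈ H, g * x * g⁻¹ ∈ H) ∧ ∃ y : G, H ⊔ Subgroup.zpowers y = K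

theorem exists_series_of_reflTransGen_cyclicStep {G : Type*} [Group G] {H K : Subgroup G}
    (h : Relation.ReflTransGen CyclicStep H K) :
    ∃ (m : ℕ) (S : Fin (m + 1) → Subgroup G), S 0 = H ∧ S (Fin.last m) = K ∧
      ∀ i : Fin m, CyclicStep (S i.castSucc) (S i.succ) := by
  induction h with
  | refl => exact ⟨0, fun _ => H, rfl, rfl, fun i => i.elim0⟩
  | @tail K K' _ hstep ih =>
    obtain ⟨m, S, h0, hl, hS⟩ := ih
    refine ⟨m + 1, Fin.snoc (α := fun _ => Subgroup G) S K', ?_, by simp, fun i => ?_⟩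
    · rw [← h0, ← Fin.castSucc_zero, Fin.snoc_castSucc]
    · induction i using Fin.lastCases with
      | last => rw [Fin.snoc_castSucc, Fin.succ_last, Fin.snoc_last, hl]; exact hstep
      | cast i => rw [Fin.snoc_castSucc, Fin.succ_castSucc, Fin.snoc_castSucc]; exact hS i

theorem reflTransGen_cyclicStep_of_commutator_le {G : Type*} [Group G] {N D : Subgroup G}
    (hND : N ≤ D) (hD : D.FG) (hcomm : ⁅D, D⁆ ≤ N) :
    Relation.ReflTransGen CyclicStep N D := by
  classical
  obtain ⟨s, rfl⟩ := hD
  suffices h : ∀ t : Finset G, t ⊆ s →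
      Relation.ReflTransGen CyclicStep N (N ⊔ Subgroup.closure (t : Set G)) by
    simpa [sup_eq_right.2 hND] using h s subset_rfl
  intro t
  induction t using Finset.induction_on with
  | empty => intro _; simpa using Relation.ReflTransGen.refl
  | insert a t _ ih =>
    intro hs
    have hD : N ⊔ Subgroup.closure ((insert a t : Finset G) : Set G) ≤
        Subgroup.closure (s : Set G) := sup_le hND (Subgroup.closure_mono (by exact_mod_cast hs))
    have hle : N ⊔ Subgroup.closure (t : Set G) ≤
        N ⊔ Subgroup.closure ((insert a t : Finset G) : Set G) :=
      sup_le_sup_left (Subgroup.closure_mono (by simp)) _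
    refine (ih ((Finset.subset_insert a t).trans hs)).tail ⟨hle, fun g hg x hx => ?_, a, ?_⟩
    · have h1 : g * x * g⁻¹ * x⁻¹ ∈ N :=
        hcomm (Subgroup.commutator_mem_commutator (hD hg) (hD (hle hx)))
      simpa using mul_mem (Subgroup.mem_sup_left h1) hx
    · rw [Finset.coe_insert, Set.insert_eq, Subgroup.closure_union, sup_assoc,
        ← Subgroup.zpowers_eq_closure, sup_comm (Subgroup.zpowers a)]

theorem reflTransGen_cyclicStep_bot_top {G : Type*} [Group G] [hG : Group.IsSolvable G]
    (hfg : ∀ H : Subgroup G, H.FG) : Relation.ReflTransGen CyclicStep (⊥ : Subgroup G) ⊤ := by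
  obtain ⟨d, hd⟩ := hG.solvable
  suffices h : ∀ i, Relation.ReflTransGen CyclicStep (derivedSeries G i) ⊤ from hd ▸ h d
  intro i
  induction i with
  | zero => exact Relation.ReflTransGen.refl
  | succ i ih =>
    exact (reflTransGen_cyclicStep_of_commutator_le (derivedSeries_antitone G i.le_succ) (hfg _)
      (derivedSeries_succ G i).ge).trans ih

/-- The elements congruent to `1` modulo four times an algebraic integer. -/
def oneModFour (K : Type*) [Field K] : Submonoid K where
  carrier := {x | ∃ α, IsIntegral ℤ α ∧ x = 1 + 4 * α}
  one_mem' := ⟨0, isIntegral_zero, by simp⟩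
  mul_mem' := by
    rintro _ _ ⟨α, hα, rfl⟩ ⟨β, hβ, rfl⟩
    have h4 : IsIntegral ℤ (4 : K) := by simpa using isIntegral_algebraMap (R := ℤ) (A := K) (x := 4)
    exact ⟨α + β + 4 * (α * β), (hα.add hβ).add (h4.mul (hα.mul hβ)), by ring⟩

theorem not_isPrimitiveRoot_prime_of_mem_oneModFour {K : Type*} [Field K] [CharZero K] {x : K}
    (hx : x ∈ oneModFour K) {p : ℕ} (hp : p.Prime) : ¬ IsPrimitiveRoot x p := by
  intro h
  choose β hβ hxβ using fun i : ℕ => (pow_mem hx i : x ^ i ∈ oneModFour K)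
  have hsum := h.geom_sum_eq_zero hp.one_lt
  simp only [hxβ, Finset.sum_add_distrib, ← Finset.mul_sum] at hsum
  have hint : IsIntegral ℤ (algebraMap ℚ K (-(p / 4))) := by
    have : algebraMap ℚ K (-(p / 4)) = ∑ i ∈ Finset.range p, β i := by
      simp at hsum ⊢
      linear_combination (-1 / 4 : K) * hsum
    rw [this]
    exact IsIntegral.sum _ fun i _ => hβ i
  rw [isIntegral_algebraMap_iff (algebraMap ℚ K).injective,
    IsIntegrallyClosed.isIntegral_iff] at hint
  obtain ⟨z, hz⟩ := hint
  have hz' : (p : ℤ) = 4 * (-z) := by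
    have : (p : ℚ) = 4 * (-z) := by simp at hz; linarith
    exact_mod_cast this
  have h4 : 4 ∣ p := by omega
  have h2 : 2 = p := (Nat.prime_dvd_prime_iff_eq Nat.prime_two hp).1 ((by norm_num : 2 ∣ 4).trans h4)
  omega

theorem eq_one_of_mem_oneModFour {K : Type*} [Field K] [CharZero K] {x : K}
    (hx : x ∈ oneModFour K) {n : ℕ} (hn : 0 < n) (h : x ^ n = 1) : x = 1 := by
  by_contra hne
  have hm : orderOf x ≠ 1 := by rwa [Ne, orderOf_eq_one_iff]
  obtain ⟨p, hp, q, hq⟩ := Nat.exists_prime_and_dvd hm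
  have hpos : 0 < orderOf x := orderOf_pos_iff.2 (isOfFinOrder_iff_pow_eq_one.2 ⟨n, hn, h⟩)
  exact not_isPrimitiveRoot_prime_of_mem_oneModFour (pow_mem hx q) hp
    ((IsPrimitiveRoot.orderOf x).pow hpos (by rw [hq, mul_comm]))

theorem linearIndependent_of_weights {A K V ι : Type*} [Monoid A] [Field K] [AddCommGroup V]
    [Module K V] (σ : A →* Module.End K V) {χ : ι → A →* K} (hχ : Function.Injective χ)
    {v : ι → V} (hv : ∀ i, v i ≠ 0) (h : ∀ i a, σ a (v i) = χ i a • v i) :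
    LinearIndependent K v := by
  rw [linearIndependent_iff']
  intro s c hc j hj
  obtain ⟨f, hf⟩ : ∃ f : Module.Dual K V, f (v j) ≠ 0 := by
    by_contra! hcon
    exact hv j ((Module.forall_dual_apply_eq_zero_iff K _).1 hcon)
  have hli := (linearIndependent_monoidHom A K).comp χ hχ
  rw [linearIndependent_iff'] at hli
  have := hli s (fun i => c i * f (v i)) ?_ j hj
  · exact (mul_eq_zero.1 this).resolve_right hf
  · ext a
    have h1 := congrArg (fun w => f (σ a w)) hc
    simp only [map_sum, map_smul, h, map_zero, smul_eq_mul] at h1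
    simp only [Finset.sum_apply, Pi.smul_apply, Function.comp_apply, smul_eq_mul, Pi.zero_apply]
    rw [← h1]
    exact Finset.sum_congr rfl fun i _ => by ring

/-- The subspace on which a monoid acts through a given character. -/
def weightSubspace {A K V : Type*} [Monoid A] [Field K] [AddCommGroup V] [Module K V]
    (σ : A →* Module.End K V) (χ : A →* K) : Submodule K V where
  carrier := {v | ∀ a, σ a v = χ a • v}
  add_mem' h h' a := by rw [map_add, h, h', smul_add]
  zero_mem' a := by simp
  smul_mem' c v h a := by rw [map_smul, h, smul_comm]

/-- The eigenvalues of all operators are congruent to `1` modulo four. -/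
def HasNeatEigenvalues {G K V : Type*} [Group G] [Field K] [AddCommGroup V] [Module K V]
    (σ : G →* Module.End K V) : Prop :=
  ∀ g (c : K) (v : V), v ≠ 0 → σ g v = c • v → c ∈ oneModFour K

theorem exists_mem_eigenvector {K V : Type*} [Field K] [IsAlgClosed K] [AddCommGroup V]
    [Module K V] [FiniteDimensional K V] (T : Module.End K V) {W : Submodule K V} (hW : W ≠ ⊥)
    (hT : ∀ v ∈ W, T v ∈ W) : ∃ v ∈ W, v ≠ 0 ∧ ∃ c : K, T v = c • v := by
  have := (Submodule.nontrivial_iff_ne_bot).2 hW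
  obtain ⟨c, hc⟩ := Module.End.exists_eigenvalue (T.restrict hT)
  obtain ⟨v, hv⟩ := hc.exists_hasEigenvector
  refine ⟨v, v.2, fun h => hv.2 (Subtype.ext h), c, ?_⟩
  simpa using congrArg Subtype.val hv.apply_eq_smul

theorem exists_common_eigenvector_of_commute {ι K V : Type*} [Field K] [IsAlgClosed K]
    [AddCommGroup V] [Module K V] [FiniteDimensional K V] (T : ι → Module.End K V)
    {W : Submodule K V} (hW : W ≠ ⊥) (hT : ∀ i, ∀ v ∈ W, T i v ∈ W)
    (hcomm : ∀ i j, ∀ v ∈ W, T i (T j v) = T j (T i v)) :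
    ∃ v ≠ 0, ∀ i, ∃ c : K, T i v = c • v := by
  let P : Set (Submodule K V) := {U | U ≠ ⊥ ∧ U ≤ W ∧ ∀ i, ∀ v ∈ U, T i v ∈ U}
  obtain ⟨U, ⟨hU, hUW, hUT⟩, hmin⟩ :=
    (wellFounded_lt (α := Submodule K V)).has_min P ⟨W, hW, le_rfl, hT⟩
  obtain ⟨u, huU, hu⟩ := U.exists_mem_ne_zero_of_ne_bot hU
  refine ⟨u, hu, fun i => ?_⟩
  obtain ⟨v, hvU, hv, c, hvc⟩ := exists_mem_eigenvector (T i) hU (hUT i)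
  let E := U ⊓ Module.End.eigenspace (T i) c
  have hE : E ∈ P := by
    refine ⟨(Submodule.ne_bot_iff _).2 ⟨v, ⟨hvU, Module.End.mem_eigenspace_iff.2 hvc⟩, hv⟩,
      inf_le_left.trans hUW, fun j w hw => ⟨hUT j w hw.1, ?_⟩⟩
    have := Module.End.mem_eigenspace_iff.1 hw.2
    refine Module.End.mem_eigenspace_iff.2 ?_
    rw [hcomm i j w (hUW hw.1), this, map_smul]
  have hEU : E = U := by
    by_contra hne
    exact hmin E hE (lt_of_le_of_ne inf_le_left hne)
  exact ⟨c, Module.End.mem_eigenspace_iff.1 (hEU ▸ huU : u ∈ E).2⟩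

theorem apply_ne_zero_of_ne_zero {G K V : Type*} [Group G] [Field K] [AddCommGroup V] [Module K V]
    (σ : G →* Module.End K V) (g : G) {v : V} (hv : v ≠ 0) : σ g v ≠ 0 := by
  intro h
  have := congrArg (σ g⁻¹) h
  rw [← Module.End.mul_apply, ← map_mul] at this
  simp [hv] at this

theorem exists_eigenvector_of_pow_apply_eq {K V : Type*} [Field K] [AddCommGroup V] [Module K V]
    {T : Module.End K V} {v : V} {μ : K} {k : ℕ}
    (hk : 0 < k) (hμ : μ ≠ 0) (hT : (T ^ k) v = μ ^ k • v)
    (hli : LinearIndependent K fun i : Fin k => (T ^ (i : ℕ)) v) :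
    ∃ w ≠ 0, T w = μ • w := by
  let f : ℕ → V := fun i => (μ⁻¹) ^ i • (T ^ i) v
  have hf : ∀ i, T (f i) = μ • f (i + 1) := fun i => by
    simp only [f, map_smul, pow_succ', Module.End.mul_apply, smul_smul]
    rw [mul_inv_cancel_left₀ hμ]
  refine ⟨∑ i ∈ Finset.range k, f i, fun h0 => ?_, ?_⟩
  · rw [Finset.sum_range] at h0
    have := Fintype.linearIndependent_iff.1 hli (fun i => μ⁻¹ ^ (i : ℕ)) h0 ⟨0, hk⟩
    simp at this
  · rw [map_sum, Finset.sum_congr rfl fun i _ => hf i, ← Finset.smul_sum]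
    congr 1
    have h1 := Finset.sum_range_succ f k
    have h2 := Finset.sum_range_succ' f k
    have h3 : f k = f 0 := by
      simp only [f, hT, smul_smul, pow_zero, one_smul]
      rw [← mul_pow, inv_mul_cancel₀ hμ, one_pow, one_smul, Module.End.one_apply]
    rw [h1, h3] at h2
    exact (add_right_cancel h2).symm

section Neat

variable {G K V : Type*} [Group G] [Field K] [IsAlgClosed K] [CharZero K] [AddCommGroup V]
  [Module K V] [FiniteDimensional K V] {σ : G →* Module.End K V}

theorem HasNeatEigenvalues.apply_mem_weightSubspace (hσ : HasNeatEigenvalues σ)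
    (A : Subgroup G) [A.Normal] (χ : A →* K) (g : G) {v : V}
    (hv : v ∈ weightSubspace (σ.comp A.subtype) χ) :
    σ g v ∈ weightSubspace (σ.comp A.subtype) χ := by
  let W := weightSubspace (σ.comp A.subtype)
  let c : A ≃* A := MulAut.conjNormal g⁻¹
  let e : (A →* K) → (A →* K) := fun ψ => ψ.comp c.toMonoidHom
  have he : Function.Injective e := fun ψ ψ' h => by
    ext a
    simpa [e] using DFunLike.congr_fun h (c.symm a)
  have hstep : ∀ ψ, ∀ w ∈ W ψ, σ g w ∈ W (e ψ) := fun ψ w hw a => by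
    have h1 := hw (c a)
    have h2 : (a : G) * g = g * (c a : G) := by simp [c, mul_assoc]
    change σ a (σ g w) = ψ (c a) • σ g w
    rw [← Module.End.mul_apply, ← map_mul, h2, map_mul, Module.End.mul_apply, ← map_smul, ← h1]
    rfl
  have hpow : ∀ i : ℕ, ∀ w ∈ W χ, (σ g ^ i) w ∈ W (e^[i] χ) := fun i w hw => by
    induction i with
    | zero => simpa using hw
    | succ i ih =>
      rw [pow_succ', Module.End.mul_apply, Function.iterate_succ_apply']
      exact hstep _ _ ih
  have hne : ∀ i : ℕ, ∀ w ≠ 0, (σ g ^ i) w ≠ 0 := fun i w hw => by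
    rw [← map_pow]; exact apply_ne_zero_of_ne_zero σ _ hw
  have hli : ∀ {ι : Type} (n : ι → ℕ), Function.Injective (fun i => e^[n i] χ) → ∀ w ∈ W χ, w ≠ 0 →
      LinearIndependent K fun i => (σ g ^ n i) w := fun n hn w hw hw0 =>
    linearIndependent_of_weights (σ.comp A.subtype) hn (fun i => hne _ _ hw0)
      fun i a => hpow _ _ hw a
  rcases eq_or_ne v 0 with rfl | hv0
  · simp
  have hper : χ ∈ Function.periodicPts e := by
    have hnot : ¬ Function.Injective fun i : ℕ => e^[i] χ := fun hinj =>
      not_finite_iff_infinite.2 inferInstance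
        (hli (fun i : ℕ => i) hinj v hv hv0).finite_of_isNoetherian
    simp only [Function.Injective, not_forall] at hnot
    obtain ⟨i, j, hij, hne⟩ := hnot
    wlog hlt : i < j generalizing i j
    · exact this j i hij.symm (Ne.symm hne) (by omega)
    obtain ⟨d, rfl⟩ := Nat.exists_eq_add_of_lt hlt
    refine ⟨d + 1, by omega, he.iterate i ?_⟩
    rw [← Function.iterate_add_apply, ← add_assoc]
    exact hij.symm
  set k := Function.minimalPeriod e χ
  have hkpos : 0 < k := Function.minimalPeriod_pos_of_mem_periodicPts hper
  have hkper : e^[k] χ = χ := Function.iterate_minimalPeriod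
  suffices k = 1 by
    have h1 := hstep _ _ hv
    rw [this] at hkper
    rwa [show e χ = χ from hkper] at h1
  have hWne : W χ ≠ ⊥ := (Submodule.ne_bot_iff _).2 ⟨v, hv, hv0⟩
  obtain ⟨u, huW, hu0, b, hub⟩ := exists_mem_eigenvector (σ g ^ k) hWne fun w hw => by
    simpa [hkper] using hpow k w hw
  have hb : b ≠ 0 := by
    rintro rfl
    exact hne k u hu0 (by simpa using hub)
  obtain ⟨l, hl⟩ := IsAlgClosed.exists_pow_nat_eq b hkpos
  have hl0 : l ≠ 0 := by rintro rfl; exact hb (by rw [← hl, zero_pow hkpos.ne'])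
  have : NeZero k := ⟨hkpos.ne'⟩
  obtain ⟨ζ, hζ⟩ := HasEnoughRootsOfUnity.exists_primitiveRoot K k
  have hlik := hli (fun i : Fin k => (i : ℕ)) (fun i j hij => Fin.ext
    (Function.iterate_injOn_Iio_minimalPeriod i.2 j.2 hij)) u huW hu0
  obtain ⟨w, hw0, hw⟩ := exists_eigenvector_of_pow_apply_eq hkpos hl0 (hl ▸ hub) hlik
  obtain ⟨w', hw0', hw'⟩ := exists_eigenvector_of_pow_apply_eq (μ := ζ * l) hkpos
    (mul_ne_zero (hζ.ne_zero hkpos.ne') hl0)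
    (by rw [mul_pow, hζ.pow_eq_one, one_mul, hl, hub]) hlik
  have hinv : l⁻¹ ∈ oneModFour K := by
    refine hσ g⁻¹ _ w hw0 ?_
    have h1 : σ g⁻¹ (σ g w) = w := by rw [← Module.End.mul_apply, ← map_mul]; simp
    rw [hw, map_smul] at h1
    rw [eq_inv_smul_iff₀ hl0, h1]
  have hζ1 : ζ ∈ oneModFour K := by
    have := mul_mem (hσ g _ w' hw0' hw') hinv
    rwa [mul_inv_cancel_right₀ hl0] at this
  have := eq_one_of_mem_oneModFour hζ1 hkpos hζ.pow_eq_one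
  exact (hζ.unique (this ▸ IsPrimitiveRoot.one))

theorem exists_common_eigenvector_of_commutator (hσ : HasNeatEigenvalues σ) {v₀ : V} (hv₀ : v₀ ≠ 0)
    (h : ∀ a ∈ commutator G, ∃ c : K, σ a v₀ = c • v₀) :
    ∃ v ≠ 0, ∀ g, ∃ c : K, σ g v = c • v := by
  choose c hc using fun a : commutator G => h a a.2
  let χ : commutator G →* K :=
    { toFun := c
      map_one' := smul_left_injective K hv₀ (by simp [← hc])
      map_mul' := fun a b => smul_left_injective K hv₀ (by
        simp only [← hc, Subgroup.coe_mul, map_mul, Module.End.mul_apply, mul_smul]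
        rw [hc b, map_smul, hc a, smul_comm]) }
  let W := weightSubspace (σ.comp (commutator G).subtype) χ
  have hv₀W : v₀ ∈ W := hc
  have hWne : W ≠ ⊥ := (Submodule.ne_bot_iff _).2 ⟨v₀, hv₀W, hv₀⟩
  have hstab : ∀ g, ∀ v ∈ W, σ g v ∈ W := fun g v hv =>
    hσ.apply_mem_weightSubspace (commutator G) χ g hv
  refine exists_common_eigenvector_of_commute σ hWne hstab fun g k v hv => ?_
  have hmem : g * k * g⁻¹ * k⁻¹ ∈ commutator G :=
    Subgroup.commutator_mem_commutator (Subgroup.mem_top g) (Subgroup.mem_top k)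
  have hgk : ∀ w ∈ W, σ g (σ k w) = χ ⟨_, hmem⟩ • σ k (σ g w) := fun w hw => by
    rw [← (hstab k _ (hstab g _ hw) ⟨_, hmem⟩)]
    change _ = σ (g * k * g⁻¹ * k⁻¹) _
    simp only [← Module.End.mul_apply, ← map_mul]
    congr 2
    group
  have hpow : χ ⟨_, hmem⟩ ^ Module.finrank K W = 1 := by
    have hdet0 : ∀ g, LinearMap.det ((σ g).restrict (hstab g)) ≠ 0 := fun g h0 => by
      have h1 : (σ g).restrict (hstab g) * (σ g⁻¹).restrict (hstab g⁻¹) = 1 := by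
        ext w
        simp only [Module.End.mul_apply, LinearMap.restrict_apply, Module.End.one_apply]
        rw [← Module.End.mul_apply, ← map_mul]
        simp
      have h2 := congrArg LinearMap.det h1
      simp [map_mul, h0] at h2
    have h1 : (σ g).restrict (hstab g) * (σ k).restrict (hstab k) =
        χ ⟨_, hmem⟩ • ((σ k).restrict (hstab k) * (σ g).restrict (hstab g)) := by
      ext w
      exact hgk w w.2
    have h2 := congrArg LinearMap.det h1
    rw [LinearMap.det_smul, map_mul, map_mul, mul_comm (LinearMap.det ((σ k).restrict _))] at h2
    exact (mul_eq_right₀ (mul_ne_zero (hdet0 g) (hdet0 k))).1 h2.symm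
  have hpos : 0 < Module.finrank K W := by
    have := (Submodule.nontrivial_iff_ne_bot).2 hWne
    exact Module.finrank_pos
  have hone := eq_one_of_mem_oneModFour (hσ _ _ v₀ hv₀ (hc ⟨_, hmem⟩)) hpos hpow
  rw [hgk v hv, show χ ⟨_, hmem⟩ = 1 from hone, one_smul]

/-- A solvable group with neat eigenvalues has a common eigenvector. -/
theorem HasNeatEigenvalues.exists_common_eigenvector [Nontrivial V] [hG : Group.IsSolvable G]
    (hσ : HasNeatEigenvalues σ) : ∃ v ≠ 0, ∀ g, ∃ c : K, σ g v = c • v := by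
  obtain ⟨d, hd⟩ := hG.solvable
  suffices h : ∀ i ≤ d, ∃ v ≠ 0, ∀ g ∈ derivedSeries G i, ∃ c : K, σ g v = c • v by
    simpa using h 0 d.zero_le
  intro i hi
  induction hi using Nat.decreasingInduction with
  | self =>
    obtain ⟨v, hv⟩ := exists_ne (0 : V)
    refine ⟨v, hv, fun g hg => ⟨1, ?_⟩⟩
    rw [hd, Subgroup.mem_bot] at hg
    simp [hg]
  | of_succ i _ ih =>
    obtain ⟨v, hv, h⟩ := ih
    obtain ⟨w, hw, hw'⟩ := exists_common_eigenvector_of_commutator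
      (σ := σ.comp (derivedSeries G i).subtype) (fun g => hσ g) hv fun a ha => h a (by
        rw [derivedSeries_succ, ← Subgroup.map_subtype_commutator]
        exact Subgroup.mem_map_of_mem _ ha)
    exact ⟨w, hw, fun g hg => hw' ⟨g, hg⟩⟩

end Neat

/-- Integral eigenvalues: if a functional on a finite `ℤ`-module is scaled by an endomorphism,
the scaling factor is an algebraic integer. -/
theorem isIntegral_of_comp_eq_smul {L K : Type*} [AddCommGroup L] [Module.Finite ℤ L] [Field K]
    {φ : L →ₗ[ℤ] K} (hφ : φ ≠ 0) {m : Module.End ℤ L} {α : K} (h : φ ∘ₗ m = α • φ) :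
    IsIntegral ℤ α := by
  obtain ⟨p, hp, hpm⟩ := Algebra.IsIntegral.isIntegral (R := ℤ) m
  have haeval : ∀ q : Polynomial ℤ, φ ∘ₗ (Polynomial.aeval m q) = Polynomial.aeval α q • φ := by
    intro q
    induction q using Polynomial.induction_on' with
    | add q r hq hr => rw [map_add, map_add, LinearMap.comp_add, hq, hr, add_smul]
    | monomial n a =>
      have hn : φ ∘ₗ (m ^ n) = α ^ n • φ := by
        induction n with
        | zero => ext; simp
        | succ n ih =>
          rw [pow_succ, Module.End.mul_eq_comp, ← LinearMap.comp_assoc, ih, LinearMap.smul_comp, h,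
            smul_smul, pow_succ]
      ext x
      have hx := LinearMap.congr_fun hn x
      simp only [LinearMap.comp_apply, LinearMap.smul_apply, smul_eq_mul] at hx
      simp [Polynomial.aeval_monomial, hx, mul_assoc]
  have h0 : Polynomial.aeval α p • φ = 0 := by
    rw [← haeval, Polynomial.aeval_def, hpm, LinearMap.comp_zero]
  exact ⟨p, hp, (smul_eq_zero.1 h0).resolve_right hφ⟩

theorem exists_semiinvariant_functional {G L K : Type*} [Group G] [Group.IsSolvable G]
    [AddCommGroup L] [Module.Finite ℤ L] [Module.Free ℤ L] [Nontrivial L] [Field K]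
    [IsAlgClosed K] [CharZero K] (ρ : G →* Module.End ℤ L)
    (hρ : ∀ g, ∃ m : Module.End ℤ L, ρ g = 1 + (4 : ℤ) • m) :
    ∃ φ : L →ₗ[ℤ] K, φ ≠ 0 ∧ ∀ g, ∃ c : K, φ ∘ₗ ρ g = c • φ := by
  let e := (Module.Free.chooseBasis ℤ L).constr (M' := K) K
  have : FiniteDimensional K (L →ₗ[ℤ] K) := e.finiteDimensional
  have : Nontrivial (L →ₗ[ℤ] K) := e.symm.toEquiv.nontrivial
  let σ : G →* Module.End K (L →ₗ[ℤ] K) :=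
    { toFun := fun g =>
        { toFun := fun φ => φ ∘ₗ ρ g⁻¹
          map_add' := fun _ _ => rfl
          map_smul' := fun _ _ => rfl }
      map_one' := by ext; simp
      map_mul' := fun g h => by ext; simp }
  have hσ : HasNeatEigenvalues σ := fun g c φ hφ hc => by
    obtain ⟨m, hm⟩ := hρ g⁻¹
    refine ⟨(c - 1) / 4, isIntegral_of_comp_eq_smul hφ (m := m) ?_, by ring⟩
    ext x
    have hx : φ (ρ g⁻¹ x) = c * φ x := LinearMap.congr_fun hc x
    simp [hm] at hx
    simp
    linear_combination hx / 4
  obtain ⟨φ, hφ, h⟩ := hσ.exists_common_eigenvector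
  refine ⟨φ, hφ, fun g => ?_⟩
  simpa [σ] using h g⁻¹

theorem group_fg_of_isIntegral {K : Type*} [Field K] [CharZero K] (F : IntermediateField ℚ K)
    [FiniteDimensional ℚ F] (U : Subgroup Kˣ) (hF : ∀ u ∈ U, (u : K) ∈ F)
    (hU : ∀ u ∈ U, IsIntegral ℤ (u : K)) : Group.FG U := by
  have : NumberField F := { }
  let f : U →* NumberField.RingOfIntegers F :=
    { toFun := fun u => ⟨⟨((u : Kˣ) : K), hF u u.2⟩,
        (isIntegral_algebraMap_iff (B := K) (algebraMap F K).injective).1 (hU u u.2)⟩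
      map_one' := rfl
      map_mul' := fun _ _ => rfl }
  have : Group.FG (NumberField.RingOfIntegers F)ˣ := Group.fg_iff_monoid_fg.2 inferInstance
  refine f.toHomUnits.group_fg_of_injective fun u v huv => ?_
  have h1 : f u = f v := congrArg Units.val huv
  exact Subtype.ext (Units.ext (congrArg (fun x : NumberField.RingOfIntegers F => ((x : F) : K)) h1))

theorem group_fg_of_trivial_on_ker {G L K : Type*} [Group G] [AddCommGroup L]
    [Module.Finite ℤ L] [Module.Free ℤ L] [AddCommGroup K] (ρ : G →* Module.End ℤ L)
    (hinj : Function.Injective ρ) (φ : L →ₗ[ℤ] K) (hφ : ∀ g, φ ∘ₗ ρ g = φ)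
    (hker : ∀ g, ∀ x ∈ LinearMap.ker φ, ρ g x = x) : Group.FG G := by
  let f : G →* Multiplicative (Module.End ℤ L) :=
    { toFun := fun g => Multiplicative.ofAdd (ρ g - 1)
      map_one' := by simp
      map_mul' := fun g h => by
        rw [← ofAdd_add]
        congr 1
        ext x
        have := hker g (ρ h x - x) (by
          rw [LinearMap.mem_ker, map_sub, sub_eq_zero]; exact LinearMap.congr_fun (hφ h) x)
        rw [map_sub, sub_eq_iff_eq_add] at this
        simp [this]
        abel }
  have : AddGroup.FG (Module.End ℤ L) := Module.Finite.iff_addGroup_fg.1 inferInstance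
  refine f.group_fg_of_injective fun g h hgh => hinj ?_
  exact sub_left_injective (Multiplicative.ofAdd.injective hgh)

/-- The congruence subgroup of level four has finite index. -/
theorem exists_finite_congruence_quotient {G L : Type*} [Group G] [AddCommGroup L]
    [Module.Finite ℤ L] [Module.Free ℤ L] (ρ : G →* Module.End ℤ L) :
    ∃ (Q : Type) (_ : Group Q) (_ : Finite Q) (f : G →* Q),
      ∀ g ∈ f.ker, ∃ m : Module.End ℤ L, ρ g = 1 + (4 : ℤ) • m := by
  classical
  let n := Module.finrank ℤ L
  let e := LinearMap.toMatrixAlgEquiv (Module.finBasis ℤ L)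
  let r : Matrix (Fin n) (Fin n) ℤ →+* Matrix (Fin n) (Fin n) (ZMod 4) :=
    (Int.castRingHom (ZMod 4)).mapMatrix
  let f : G →* Matrix (Fin n) (Fin n) (ZMod 4) :=
    (r : _ →* _).comp ((e : Module.End ℤ L →* Matrix (Fin n) (Fin n) ℤ).comp ρ)
  refine ⟨_, inferInstance, inferInstance, f.toHomUnits, fun g hg => ?_⟩
  have h1 : r (e (ρ g)) = r 1 := (congrArg Units.val hg).trans (map_one r).symm
  have h2 : ∀ i j, ∃ a : ℤ, e (ρ g) i j = (1 : Matrix (Fin n) (Fin n) ℤ) i j + 4 * a := fun i j => by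
    have h3 : ((e (ρ g) i j : ℤ) : ZMod 4) = ((1 : Matrix (Fin n) (Fin n) ℤ) i j : ℤ) :=
      congrFun (congrFun h1 i) j
    obtain ⟨a, ha⟩ := (ZMod.intCast_eq_intCast_iff_dvd_sub _ _ 4).1 h3.symm
    exact ⟨a, by push_cast at ha; linarith⟩
  choose a ha using h2
  refine ⟨e.symm (Matrix.of a), e.injective ?_⟩
  rw [map_add, map_one, map_zsmul, AlgEquiv.apply_symm_apply]
  ext i j
  simp [ha]

theorem finrank_ker_lt_of_ne_zero {L K : Type*} [AddCommGroup L] [Module.Finite ℤ L]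
    [Module.Free ℤ L] [Field K] [CharZero K] {φ : L →ₗ[ℤ] K} (hφ : φ ≠ 0) :
    Module.finrank ℤ (LinearMap.ker φ) < Module.finrank ℤ L := by
  have h1 := (LinearMap.ker φ).finrank_quotient_add_finrank
  rw [φ.quotKerEquivRange.finrank_eq] at h1
  have : Module.Finite ℤ (LinearMap.range φ) := inferInstance
  have : Module.IsTorsionFree ℤ (LinearMap.range φ) := inferInstance
  have : Nontrivial (LinearMap.range φ) :=
    Submodule.nontrivial_iff_ne_bot.2 (by rwa [Ne, LinearMap.range_eq_bot])
  have : 0 < Module.finrank ℤ (LinearMap.range φ) := Module.finrank_pos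
  omega

theorem scaling_mem_adjoin {L K : Type*} [AddCommGroup L] [Module.Finite ℤ L] [Field K]
    [CharZero K] [Algebra.IsAlgebraic ℚ K] {φ : L →ₗ[ℤ] K} (hφ : φ ≠ 0) :
    ∃ F : IntermediateField ℚ K, FiniteDimensional ℚ F ∧
      ∀ (m : Module.End ℤ L) (c : K), φ ∘ₗ m = c • φ → c ∈ F := by
  obtain ⟨s, hs⟩ := Module.Finite.fg_top (R := ℤ) (M := L)
  let F := IntermediateField.adjoin ℚ (φ '' s)
  have hF : ∀ x, φ x ∈ F := fun x => by
    have hx : x ∈ Submodule.span ℤ (s : Set L) := hs ▸ Submodule.mem_top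
    induction hx using Submodule.span_induction with
    | mem x hx => exact IntermediateField.subset_adjoin _ _ ⟨x, hx, rfl⟩
    | zero => rw [map_zero]; exact zero_mem F
    | add x y _ _ hx hy => rw [map_add]; exact add_mem hx hy
    | smul a x _ hx => rw [map_zsmul]; exact zsmul_mem hx a
  have := (s.finite_toSet.image φ).to_subtype
  refine ⟨F, IntermediateField.finiteDimensional_adjoin fun x _ =>
    Algebra.IsIntegral.isIntegral x, fun m c h => ?_⟩
  obtain ⟨x, hx⟩ : ∃ x, φ x ≠ 0 := by
    by_contra! hcon
    exact hφ (LinearMap.ext hcon)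
  have hmx : φ (m x) = c * φ x := LinearMap.congr_fun h x
  rw [eq_div_of_mul_eq hx hmx.symm]
  exact div_mem (hF _) (hF _)

theorem group_fg_of_congruence {G L : Type} [Group G] [Group.IsSolvable G]
    [AddCommGroup L] [Module.Finite ℤ L] [Module.Free ℤ L] [Nontrivial L] (ρ : G →* Module.End ℤ L)
    (hinj : Function.Injective ρ) (hρ : ∀ g, ∃ m : Module.End ℤ L, ρ g = 1 + (4 : ℤ) • m)
    (ih : ∀ L' : Submodule ℤ L, Module.finrank ℤ L' < Module.finrank ℤ L →
      ∀ U : Subgroup (Module.End ℤ L')ˣ, Group.IsSolvable U → Group.FG U) : Group.FG G := by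
  obtain ⟨φ, hφ, hc⟩ := exists_semiinvariant_functional (K := AlgebraicClosure ℚ) ρ hρ
  choose c hc using hc
  let χ : G →* AlgebraicClosure ℚ :=
    { toFun := c
      map_one' := smul_left_injective _ hφ (by
        change c 1 • φ = (1 : AlgebraicClosure ℚ) • φ
        rw [← hc, map_one, one_smul, Module.End.one_eq_id, LinearMap.comp_id])
      map_mul' := fun g h => smul_left_injective _ hφ (by
        change c (g * h) • φ = (c g * c h) • φ
        rw [← hc, map_mul, Module.End.mul_eq_comp, ← LinearMap.comp_assoc, hc g,
          LinearMap.smul_comp, hc h, smul_smul]) }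
  have : Algebra.IsAlgebraic ℚ (AlgebraicClosure ℚ) := by
    rw [Subsingleton.elim (DivisionRing.toRatAlgebra : Algebra ℚ (AlgebraicClosure ℚ))
      (AlgebraicClosure.instAlgebra ℚ)]
    exact AlgebraicClosure.isAlgebraic ℚ
  obtain ⟨F, hfin, hF⟩ := scaling_mem_adjoin hφ
  refine χ.toHomUnits.group_fg_of_ker_of_range ?_ (group_fg_of_isIntegral F _ ?_ ?_)
  · let N := χ.toHomUnits.ker
    have hN : ∀ g : N, φ ∘ₗ ρ g = φ := fun g => by
      rw [hc, show c g = 1 from congrArg Units.val g.2, one_smul]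
    have hmaps : ∀ g : N, ∀ x ∈ LinearMap.ker φ, ρ g x ∈ LinearMap.ker φ := fun g x hx => by
      rw [LinearMap.mem_ker] at hx ⊢
      rw [← hx]
      exact LinearMap.congr_fun (hN g) x
    let f : N →* Module.End ℤ (LinearMap.ker φ) :=
      { toFun := fun g => (ρ g).restrict (hmaps g)
        map_one' := by ext; simp
        map_mul' := fun g h => by ext; simp }
    refine f.toHomUnits.group_fg_of_ker_of_range ?_ ?_
    · refine group_fg_of_trivial_on_ker ((ρ.comp N.subtype).comp f.toHomUnits.ker.subtype)
        (hinj.comp (Subtype.val_injective.comp Subtype.val_injective)) φ (fun g => hN g) ?_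
      intro g x hx
      have h1 : f g = 1 := congrArg Units.val g.2
      exact congrArg Subtype.val (LinearMap.congr_fun h1 ⟨x, hx⟩)
    · exact ih _ (finrank_ker_lt_of_ne_zero hφ) _
        (Group.isSolvable_of_surjective f.toHomUnits.rangeRestrict_surjective)
  · rintro _ ⟨g, rfl⟩
    exact hF (ρ g) (c g) (hc g)
  · rintro _ ⟨g, rfl⟩
    exact isIntegral_of_comp_eq_smul hφ (hc g)

/-- Every solvable group of automorphisms of a finite free `ℤ`-module is finitely generated. -/
theorem group_fg_of_isSolvable_of_injective {G L : Type} [Group G] [Group.IsSolvable G]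
    [AddCommGroup L] [Module.Finite ℤ L] [Module.Free ℤ L] (ρ : G →* Module.End ℤ L)
    (hinj : Function.Injective ρ) : Group.FG G := by
  induction hd : Module.finrank ℤ L using Nat.strong_induction_on generalizing G L with
  | _ d ih =>
    subst hd
    rcases subsingleton_or_nontrivial L with hL | hL
    · have : Subsingleton G := hinj.subsingleton
      exact Group.fg_of_finite
    · obtain ⟨Q, _, _, f, hf⟩ := exists_finite_congruence_quotient ρ
      refine f.group_fg_of_ker_of_range ?_ Group.fg_of_finite
      refine group_fg_of_congruence (ρ.comp f.ker.subtype)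
        (hinj.comp Subtype.val_injective) (fun g => hf g g.2) fun L' hL' U hU => ?_
      exact ih _ hL' ((Units.coeHom _).comp U.subtype)
        (Units.val_injective.comp Subtype.val_injective) rfl

/-- Every solvable subgroup of `GL(n,ℤ)` is polycyclic: it admits a subnormal series
with cyclic factors (each term is normal in the next, and each successive quotient is
generated by the previous term together with a single element). -/
theorem stmt_10 (n : ℕ) (G : Subgroup (Matrix (Fin n) (Fin n) ℤ)ˣ)
    (hG : IsSolvable G) :
    ∃ (m : ℕ) (S : Fin (m + 1) → Subgroup ↥G),
      S 0 = ⊥ ∧ S (Fin.last m) = ⊤ ∧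
      ∀ i : Fin m,
        S i.castSucc ≤ S i.succ ∧
        (∀ g ∈ S i.succ, ∀ x ∈ S i.castSucc, g * x * g⁻¹ ∈ S i.castSucc) ∧
        ∃ y : ↥G, S i.castSucc ⊔ Subgroup.zpowers y = S i.succ := by
  have hG' : Group.IsSolvable G := hG
  let e : Matrix (Fin n) (Fin n) ℤ ≃ₐ[ℤ] Module.End ℤ (Fin n → ℤ) := Matrix.toLinAlgEquiv'
  refine exists_series_of_reflTransGen_cyclicStep (reflTransGen_cyclicStep_bot_top fun H => ?_)
  rw [← Group.fg_iff_subgroup_fg]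
  exact group_fg_of_isSolvable_of_injective
    ((e : Matrix (Fin n) (Fin n) ℤ →* Module.End ℤ (Fin n → ℤ)).comp
      ((Units.coeHom _).comp (G.subtype.comp H.subtype)))
    (e.injective.comp (Units.val_injective.comp
      (Subtype.val_injective.comp Subtype.val_injective)))
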